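/- Let K be a field, f ∈ K[x] of degree n ≥ 1, a ∈ K[x] of degree < n, 1 ≤ m ≤ n, and d ≥ 1. Then rank Hk_{m,d}(a,f) ≤ ν_m^{(a,f)}. If rank Hk_{m,d}(a,f) = ν_m^{(a,f)}, then the determinantal degree of R_{m,m}^{(a,f)} equals ν_m^{(a,f)} and H(y) = X^T·(y·I_n − M_a)^{−1}·X is describable in degree d. In particular, if Hk_{m,d}(a,f) has rank n, then the determinantal degree of R_{m,m}^{(a,f)} and the determinantal degree ν_m^{(a,f)} of R_m^{(a,f)} both equal n and H(y) is describable in degree d. -/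

import Mathlib

open Polynomial Matrix

noncomputable section

variable {K : Type*} [Field K]

/-- Matrix of multiplication by `a` modulo `f` in the basis `1, x, ..., x^(n-1)`:
its `k`-th column is the coefficient vector of `(x^k * a) mod f`. -/
def mulMat (f a : K[X]) (n : ℕ) : Matrix (Fin n) (Fin n) K :=
  fun i k => ((X ^ (k : ℕ) * a) % f).coeff (i : ℕ)

/-- `r(x, a(x))` where `r` is the bivariate polynomial with coefficient vector `v`
(under the coefficient-vector identification `r = v 0 + (v 1) x + ⋯ + (v (m-1)) x^(m-1)`). -/
def relEval (a : K[X]) {m : ℕ} (v : Fin m → K[X]) : K[X] :=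
  ∑ i : Fin m, X ^ (i : ℕ) * ((v i).comp a)

/-- `v` represents an element of the module of relations `R_m^{(a,f)}`. -/
def IsRelation (f a : K[X]) {m : ℕ} (v : Fin m → K[X]) : Prop :=
  f ∣ relEval a v

/-- Matrix of relations of `R_m^{(a,f)}`: nonsingular, all columns are relations. -/
def IsRelMat (f a : K[X]) {m : ℕ} (R : Matrix (Fin m) (Fin m) K[X]) : Prop :=
  R.det ≠ 0 ∧ ∀ j, IsRelation f a (fun i => R i j)

/-- Basis of relations of `R_m^{(a,f)}`: matrix of relations whose columns generate
the module of relations. -/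
def IsRelBasis (f a : K[X]) {m : ℕ} (R : Matrix (Fin m) (Fin m) K[X]) : Prop :=
  IsRelMat f a R ∧ ∀ v : Fin m → K[X], IsRelation f a v →
    v ∈ Submodule.span K[X] (Set.range fun j => fun i => R i j)


/-- `v` represents an element of the truncated module of relations `R_{ℓ,m}^{(a,f)}`:
for every `k ≥ 0`, the coefficients of `x^0, …, x^(ℓ-1)` of `(a^k · r(x,a(x))) mod f` vanish. -/
def IsTruncRelation (f a : K[X]) (ℓ : ℕ) {m : ℕ} (v : Fin m → K[X]) : Prop :=
  ∀ (k j : ℕ), j < ℓ → ((a ^ k * relEval a v) % f).coeff j = 0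

/-- The `n×m` matrix `X` whose top `m×m` block is the identity, over any `α`. -/
def Xup (α : Type*) [Zero α] [One α] (n m : ℕ) : Matrix (Fin n) (Fin m) α :=
  fun i j => if (i : ℕ) = (j : ℕ) then 1 else 0

/-- The `ℓ×n` matrix `(I_ℓ 0)` whose left `ℓ×ℓ` block is the identity, over any `α`. -/
def projL (α : Type*) [Zero α] [One α] (ℓ n : ℕ) : Matrix (Fin ℓ) (Fin n) α :=
  fun i j => if (i : ℕ) = (j : ℕ) then 1 else 0

/-- The rational matrix `(I_ℓ 0) · (y I_n − M_a)⁻¹ · X ∈ K(y)^{ℓ×m}`. -/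
def fracMat (f a : K[X]) (n ℓ m : ℕ) : Matrix (Fin ℓ) (Fin m) (RatFunc K) :=
  projL (RatFunc K) ℓ n *
    ((charmatrix (mulMat f a n)).map (algebraMap K[X] (RatFunc K)))⁻¹ *
    Xup (RatFunc K) n m

/-- `v ∈ denom(F)`: every entry of `F·v` is a polynomial. -/
def memDenom {ℓ m : ℕ} (F : Matrix (Fin ℓ) (Fin m) (RatFunc K)) (v : Fin m → K[X]) : Prop :=
  ∀ i, ∃ p : K[X],
    F.mulVec (fun j => algebraMap K[X] (RatFunc K) (v j)) i = algebraMap K[X] (RatFunc K) p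


/-- The columns of `D` form a basis of the truncated module of relations `R_{ℓ,m}^{(a,f)}`. -/
def IsTruncBasis (f a : K[X]) (ℓ : ℕ) {m : ℕ} (D : Matrix (Fin m) (Fin m) K[X]) : Prop :=
  D.det ≠ 0 ∧ (∀ j, IsTruncRelation f a ℓ (fun i => D i j)) ∧
    ∀ v : Fin m → K[X], IsTruncRelation f a ℓ v →
      v ∈ Submodule.span K[X] (Set.range fun j => fun i => D i j)

/-- Degree of a polynomial matrix: the maximum of the degrees of its entries. -/
def matDeg {ι κ : Type*} [Fintype ι] [Fintype κ] (M : Matrix ι κ K[X]) : WithBot ℕ :=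
  Finset.univ.sup fun p : ι × κ => (M p.1 p.2).degree

/-- `N·D⁻¹` is a right fraction description of `F`. -/
def IsRightDesc {ℓ m : ℕ} (F : Matrix (Fin ℓ) (Fin m) (RatFunc K))
    (N : Matrix (Fin ℓ) (Fin m) K[X]) (D : Matrix (Fin m) (Fin m) K[X]) : Prop :=
  D.det ≠ 0 ∧ F * D.map (algebraMap K[X] (RatFunc K)) = N.map (algebraMap K[X] (RatFunc K))

/-- `D̂⁻¹·N̂` is a left fraction description of `F`. -/
def IsLeftDesc {ℓ m : ℕ} (F : Matrix (Fin ℓ) (Fin m) (RatFunc K))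
    (Dh : Matrix (Fin ℓ) (Fin ℓ) K[X]) (Nh : Matrix (Fin ℓ) (Fin m) K[X]) : Prop :=
  Dh.det ≠ 0 ∧ Dh.map (algebraMap K[X] (RatFunc K)) * F = Nh.map (algebraMap K[X] (RatFunc K))

/-- `F` is describable in degree `d`. -/
def DescribableInDegree {ℓ m : ℕ} (F : Matrix (Fin ℓ) (Fin m) (RatFunc K)) (d : ℕ) : Prop :=
  (∃ N D, IsRightDesc F N D ∧ matDeg D ≤ (d : WithBot ℕ)) ∧
    (∃ Dh Nh, IsLeftDesc F Dh Nh ∧ matDeg Dh ≤ (d : WithBot ℕ))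

/-- The block Hankel matrix `Hk_{m,d}(a,f)`, indexed by `Fin d × Fin m`
(block row/column index first): its `((i,r),(j,c))` entry is `(Xᵀ · M_a^(i+j) · X) r c`. -/
def hankelMat (f a : K[X]) (n m d : ℕ) :
    Matrix (Fin d × Fin m) (Fin d × Fin m) K :=
  fun p q => ((Xup K n m)ᵀ * (mulMat f a n) ^ ((p.1 : ℕ) + (q.1 : ℕ)) * Xup K n m) p.2 q.2

theorem det_ne_zero_ker {m : ℕ} (B : Matrix (Fin m) (Fin m) K[X]) (hB : B.det ≠ 0) :
    Function.Injective (Matrix.toLin' B) := by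
  rw [← LinearMap.ker_eq_bot, LinearMap.ker_eq_bot']
  intro v hv
  by_contra h
  exact hB (Matrix.exists_mulVec_eq_zero_iff.1 ⟨v, h, by simpa using hv⟩)

theorem finrank_quot_det {m : ℕ} (B : Matrix (Fin m) (Fin m) K[X]) (hB : B.det ≠ 0)
    (N : Submodule K[X] (Fin m → K[X])) (hN : N = LinearMap.range (Matrix.toLin' B)) :
    Module.finrank K ((Fin m → K[X]) ⧸ N) = B.det.natDegree := by
  have hinj := det_ne_zero_ker B hB
  let e₀ : (Fin m → K[X]) ≃ₗ[K[X]] N :=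
    (LinearEquiv.ofInjective _ hinj).trans (LinearEquiv.ofEq _ _ hN.symm)
  have he₀ : ∀ x, (e₀ x : Fin m → K[X]) = Matrix.toLin' B x := fun x => rfl
  have h : Module.finrank K[X] N = Module.finrank K[X] (Fin m → K[X]) := e₀.finrank_eq.symm
  let b := Pi.basisFun K[X] (Fin m)
  let b' := Submodule.smithNormalFormTopBasis b h
  let ab := Submodule.smithNormalFormBotBasis b h
  let c := Submodule.smithNormalFormCoeffs b h
  have hab : ∀ i, (ab i : Fin m → K[X]) = c i • b' i := Submodule.smithNormalFormBotBasis_def b h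
  have hc : ∀ i, c i ≠ 0 := Submodule.smithNormalFormCoeffs_ne_zero b h
  have hfin : ∀ i, FiniteDimensional K (K[X] ⧸ Ideal.span ({c i} : Set K[X])) := fun i =>
    PowerBasis.finite <| AdjoinRoot.powerBasis <| hc i
  have hassoc : Associated B.det (∏ i, c i) := by
    rw [← Matrix.det_diagonal, ← LinearMap.det_toLin b' (Matrix.diagonal c), ← LinearMap.det_toLin' B]
    let e := e₀.trans (ab.equiv b' (Equiv.refl _))
    refine LinearMap.associated_det_of_eq_comp e _ _ ?_
    have key : ∀ z : N, (z : Fin m → K[X]) =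
        Matrix.toLin b' b' (Matrix.diagonal c) (ab.equiv b' (Equiv.refl _) z) := by
      have : N.subtype = (Matrix.toLin b' b' (Matrix.diagonal c)).comp
          (ab.equiv b' (Equiv.refl _)).toLinearMap := by
        refine ab.ext fun i => ?_
        simp [Matrix.toLin_self, hab, Matrix.diagonal_apply]
      intro z
      exact LinearMap.congr_fun this z
    intro x
    rw [← he₀, key]
    rfl
  rw [natDegree_eq_of_degree_eq (degree_eq_degree_of_associated hassoc),
    natDegree_prod _ _ fun i _ => hc i, Submodule.finrank_quotient_eq_sum K b h]
  congr with i
  exact (AdjoinRoot.powerBasis <| hc i).finrank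

theorem finrank_range_det {m : ℕ} (B : Matrix (Fin m) (Fin m) K[X]) (hB : B.det ≠ 0)
    {V : Type*} [AddCommGroup V] [Module K V] (Φ : (Fin m → K[X]) →ₗ[K] V)
    (h1 : ∀ v, Φ v = 0 → v ∈ Submodule.span K[X] (Set.range fun j => fun i => B i j))
    (h2 : ∀ v, v ∈ Submodule.span K[X] (Set.range fun j => fun i => B i j) → Φ v = 0) :
    Module.finrank K (LinearMap.range Φ) = B.det.natDegree := by
  rw [← finrank_quot_det B hB _ (by rw [Matrix.range_toLin']),
    ← Φ.quotKerEquivRange.finrank_eq]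
  have : LinearMap.ker Φ = (Submodule.span K[X] (Set.range B.col)).restrictScalars K := by
    ext v
    exact ⟨fun h => h1 v h, fun h => h2 v h⟩
  rw [this]
  rfl

theorem abs_lin {A B V C : Type*} [AddCommGroup A] [Module K A] [AddCommGroup B] [Module K B]
    [AddCommGroup V] [Module K V] [AddCommGroup C] [Module K C] [FiniteDimensional K V]
    (ι : A →ₗ[K] B) (Φ : B →ₗ[K] V) (O : V →ₗ[K] C)
    (h : Module.finrank K (LinearMap.range (O ∘ₗ Φ ∘ₗ ι)) = Module.finrank K (LinearMap.range Φ)) :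
    LinearMap.range (Φ ∘ₗ ι) = LinearMap.range Φ ∧
      Function.Injective (O.domRestrict (LinearMap.range Φ)) := by
  have hle : LinearMap.range (Φ ∘ₗ ι) ≤ LinearMap.range Φ := LinearMap.range_comp_le_range _ _
  have e1 : LinearMap.range (Φ ∘ₗ ι) = LinearMap.range Φ := by
    apply Submodule.eq_of_le_of_finrank_le hle
    rw [← h, LinearMap.range_comp]
    exact Submodule.finrank_map_le _ _
  refine ⟨e1, ?_⟩
  have h3 : LinearMap.range (O.domRestrict (LinearMap.range Φ)) =
      LinearMap.range (O ∘ₗ Φ ∘ₗ ι) := by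
    rw [LinearMap.range_domRestrict, LinearMap.range_comp, e1]
  have h4 := LinearMap.finrank_range_add_finrank_ker (O.domRestrict (LinearMap.range Φ))
  rw [h3, h] at h4
  rw [← LinearMap.ker_eq_bot]
  apply Submodule.finrank_eq_zero.1
  omega

theorem monic_det {m d : ℕ} (D : Matrix (Fin m) (Fin m) K[X])
    (hD : ∀ i j, (D i j - if i = j then X ^ d else 0).degree < (d : WithBot ℕ)) :
    D.det ≠ 0 := by
  intro h
  obtain ⟨v, hv, hv0⟩ := Matrix.exists_mulVec_eq_zero_iff.2 h
  obtain ⟨i₁, hi₁⟩ := Function.ne_iff.1 hv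
  obtain ⟨i, -, hi⟩ := Finset.exists_max_image Finset.univ (fun i => (v i).degree) ⟨i₁, Finset.mem_univ _⟩
  have hvi : v i ≠ 0 := by
    intro h0
    have := hi i₁ (Finset.mem_univ _)
    rw [h0, degree_zero, le_bot_iff, degree_eq_bot] at this
    exact hi₁ this
  have h0 : ∑ j, D i j * v j = 0 := congrFun hv0 i
  have h1 : ∑ j, (D i j - if i = j then X ^ d else 0) * v j = - (X ^ d * v i) := by
    simp [sub_mul, Finset.sum_sub_distrib, h0]
  have h2 : (∑ j, (D i j - if i = j then X ^ d else 0) * v j).degree < (X ^ d * v i).degree := by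
    rw [degree_mul, degree_X_pow]
    refine (degree_sum_le _ _).trans_lt ?_
    rw [Finset.sup_lt_iff (by
      rw [degree_eq_natDegree hvi]; exact WithBot.bot_lt_coe _)]
    intro j _
    rw [degree_mul]
    calc _ ≤ (D i j - if i = j then X ^ d else 0).degree + (v i).degree := by
            gcongr; exact hi j (Finset.mem_univ _)
      _ < _ := by
        rw [degree_eq_natDegree hvi]
        exact WithBot.add_lt_add_right (WithBot.coe_ne_bot) (hD i j)
  rw [h1, degree_neg] at h2
  exact lt_irrefl _ h2

theorem matDeg_monic {m d : ℕ} (D : Matrix (Fin m) (Fin m) K[X])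
    (hD : ∀ i j, (D i j - if i = j then X ^ d else 0).degree < (d : WithBot ℕ)) :
    matDeg D ≤ (d : WithBot ℕ) := by
  unfold matDeg
  apply Finset.sup_le
  rintro ⟨i, j⟩ -
  have : D i j = (D i j - if i = j then X ^ d else 0) + if i = j then X ^ d else 0 := by ring
  rw [this]
  refine (degree_add_le _ _).trans (max_le (hD i j).le ?_)
  split_ifs <;> simp

/-- Constants into rational functions. -/
def sigmaHom (K : Type*) [Field K] : K →+* RatFunc K :=
  (algebraMap K[X] (RatFunc K)).comp C

/-- Resolvent. -/
def resolv {n : ℕ} (M : Matrix (Fin n) (Fin n) K) : Matrix (Fin n) (Fin n) (RatFunc K) :=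
  ((charmatrix M).map (algebraMap K[X] (RatFunc K)))⁻¹

theorem charmatrix_map_eq {n : ℕ} (M : Matrix (Fin n) (Fin n) K) :
    (charmatrix M).map (algebraMap K[X] (RatFunc K)) =
      (algebraMap K[X] (RatFunc K) X) • (1 : Matrix (Fin n) (Fin n) (RatFunc K)) -
        M.map (sigmaHom K) := by
  ext i j
  by_cases h : i = j <;>
    simp [h, sigmaHom]

theorem charmatrix_map_det {n : ℕ} (M : Matrix (Fin n) (Fin n) K) :
    ((charmatrix M).map (algebraMap K[X] (RatFunc K))).det =
      algebraMap K[X] (RatFunc K) M.charpoly := by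
  rw [Matrix.charpoly, RingHom.map_det]; rfl

theorem charpoly_map_ne {n : ℕ} (M : Matrix (Fin n) (Fin n) K) :
    algebraMap K[X] (RatFunc K) M.charpoly ≠ 0 := by
  rw [Ne, FaithfulSMul.algebraMap_eq_zero_iff]
  exact (Matrix.charpoly_monic M).ne_zero

theorem charmatrix_isUnit {n : ℕ} (M : Matrix (Fin n) (Fin n) K) :
    IsUnit ((charmatrix M).map (algebraMap K[X] (RatFunc K))).det := by
  rw [charmatrix_map_det]
  exact (charpoly_map_ne M).isUnit

theorem resolv_step {n : ℕ} (M : Matrix (Fin n) (Fin n) K) :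
    (algebraMap K[X] (RatFunc K) X) • resolv M = 1 + resolv M * M.map (sigmaHom K) := by
  have h : resolv M * ((charmatrix M).map (algebraMap K[X] (RatFunc K))) = 1 :=
    Matrix.nonsing_inv_mul _ (charmatrix_isUnit M)
  rw [charmatrix_map_eq, mul_sub, Matrix.mul_smul, mul_one] at h
  rw [← h]; abel

theorem resolv_poly_pow {n : ℕ} (M : Matrix (Fin n) (Fin n) K) (t : ℕ) :
    ∃ P : Matrix (Fin n) (Fin n) K[X], (algebraMap K[X] (RatFunc K) (X ^ t)) • resolv M =
      P.map (algebraMap K[X] (RatFunc K)) + resolv M * (M ^ t).map (sigmaHom K) := by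
  induction t with
  | zero => exact ⟨0, by ext; simp [Matrix.map_one]⟩
  | succ t ih =>
    obtain ⟨P, hP⟩ := ih
    refine ⟨(X : K[X]) • P + (M ^ t).map C, ?_⟩
    rw [pow_succ', map_mul, mul_smul, hP, smul_add, ← Matrix.smul_mul, resolv_step, add_mul,
      one_mul, Matrix.mul_assoc, ← Matrix.map_mul, ← pow_succ', ← add_assoc]
    congr 1
    ext i j
    simp [sigmaHom]

theorem resolv_poly {n : ℕ} (M : Matrix (Fin n) (Fin n) K) (p : K[X]) :
    ∃ P : Matrix (Fin n) (Fin n) K[X], (algebraMap K[X] (RatFunc K) p) • resolv M =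
      P.map (algebraMap K[X] (RatFunc K)) + resolv M * (aeval M p).map (sigmaHom K) := by
  induction p using Polynomial.induction_on' with
  | add p q hp hq =>
    obtain ⟨P, hP⟩ := hp
    obtain ⟨Q, hQ⟩ := hq
    refine ⟨P + Q, ?_⟩
    rw [map_add, add_smul, hP, hQ, map_add, Matrix.map_add _ (map_add _),
      Matrix.map_add _ (map_add _), mul_add]
    abel
  | monomial t c =>
    obtain ⟨P, hP⟩ := resolv_poly_pow M t
    refine ⟨C c • P, ?_⟩
    rw [← C_mul_X_pow_eq_monomial, map_mul, mul_smul, hP, map_mul, aeval_C, map_pow, aeval_X,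
      smul_add, ← Matrix.mul_smul]
    congr 2
    · ext; simp
    · ext i j
      simp [Matrix.algebraMap_eq_diagonal, Matrix.diagonal_mul, sigmaHom]

theorem resolv_kill {n ℓ : ℕ} (M : Matrix (Fin n) (Fin n) K) (E : Matrix (Fin ℓ) (Fin n) K)
    (c : Fin n → K) (h : ∀ k : ℕ, E *ᵥ ((M ^ k) *ᵥ c) = 0) :
    (E.map (sigmaHom K) * resolv M) *ᵥ (sigmaHom K ∘ c) = 0 := by
  have hk : ∀ k : ℕ, (algebraMap K[X] (RatFunc K) (X ^ k)) •
      ((E.map (sigmaHom K) * resolv M) *ᵥ (sigmaHom K ∘ c)) =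
      (E.map (sigmaHom K) * resolv M) *ᵥ (sigmaHom K ∘ ((M ^ k) *ᵥ c)) := by
    intro k
    induction k with
    | zero => simp
    | succ k ih =>
      have e0 : E.map (sigmaHom K) *ᵥ (sigmaHom K ∘ ((M ^ k) *ᵥ c)) = 0 := by
        ext i
        have := congrArg (sigmaHom K) (congrFun (h k) i)
        rw [RingHom.map_mulVec] at this
        simpa using this
      rw [pow_succ', map_mul, mul_smul, ih, ← Matrix.smul_mulVec, ← Matrix.mul_smul, resolv_step,
        Matrix.mul_add, Matrix.add_mulVec, Matrix.mul_one, e0, zero_add, ← Matrix.mul_assoc, ← Matrix.mulVec_mulVec]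
      congr 1
      rw [pow_succ', ← Matrix.mulVec_mulVec]
      ext i
      rw [Function.comp_apply, RingHom.map_mulVec]
  have hp : ∀ p : K[X], (algebraMap K[X] (RatFunc K) p) •
      ((E.map (sigmaHom K) * resolv M) *ᵥ (sigmaHom K ∘ c)) =
      (E.map (sigmaHom K) * resolv M) *ᵥ (sigmaHom K ∘ ((aeval M p) *ᵥ c)) := by
    intro p
    induction p using Polynomial.induction_on' with
    | add p q hp hq =>
      rw [map_add, add_smul, hp, hq, ← Matrix.mulVec_add, map_add, Matrix.add_mulVec]
      congr 1
      ext i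
      simp
    | monomial t b =>
      rw [← C_mul_X_pow_eq_monomial, map_mul, mul_smul, hk, map_mul, aeval_C, map_pow, aeval_X,
        ← Matrix.mulVec_smul]
      congr 1
      ext i
      simp [Algebra.algebraMap_eq_smul_one (A := Matrix (Fin n) (Fin n) K), Matrix.smul_mulVec,
        sigmaHom]
  have := hp M.charpoly
  rw [Matrix.aeval_self_charpoly] at this
  have h0 : (sigmaHom K ∘ ((0 : Matrix (Fin n) (Fin n) K) *ᵥ c)) = 0 := by ext; simp
  rw [h0, Matrix.mulVec_zero] at this
  exact (smul_eq_zero.1 this).resolve_left (charpoly_map_ne M)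

/-- Evaluate a polynomial vector at a matrix. -/
def evalM {n m : ℕ} (M : Matrix (Fin n) (Fin n) K) (Y : Matrix (Fin n) (Fin m) K)
    (v : Fin m → K[X]) : Fin n → K := ∑ i, (aeval M (v i)) *ᵥ (Y.col i)

theorem frac_poly {n m ℓ : ℕ} (M : Matrix (Fin n) (Fin n) K) (E : Matrix (Fin ℓ) (Fin n) K)
    (Y : Matrix (Fin n) (Fin m) K) (v : Fin m → K[X])
    (h : ∀ k : ℕ, E *ᵥ ((M ^ k) *ᵥ evalM M Y v) = 0) :
    ∃ p : Fin ℓ → K[X], (E.map (sigmaHom K) * resolv M * Y.map (sigmaHom K)) *ᵥ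
      (algebraMap K[X] (RatFunc K) ∘ v) = algebraMap K[X] (RatFunc K) ∘ p := by
  choose P hP using resolv_poly M
  refine ⟨E.map C *ᵥ ∑ i, P (v i) *ᵥ (C ∘ Y.col i), ?_⟩
  have h1 : (resolv M * Y.map (sigmaHom K)) *ᵥ (algebraMap K[X] (RatFunc K) ∘ v) =
      ∑ i, (algebraMap K[X] (RatFunc K) (v i) • resolv M) *ᵥ (sigmaHom K ∘ Y.col i) := by
    rw [← Matrix.mulVec_mulVec]
    simp_rw [Matrix.smul_mulVec, ← Matrix.mulVec_smul, ← Matrix.mulVec_sum]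
    congr 1
    ext i
    simp only [Matrix.mulVec, dotProduct, Finset.sum_apply, Pi.smul_apply, smul_eq_mul,
      Matrix.map_apply, Function.comp_apply, Matrix.col_apply]
    exact Finset.sum_congr rfl fun _ _ => mul_comm _ _
  have h2 : ∑ i, (resolv M * (aeval M (v i)).map (sigmaHom K)) *ᵥ (sigmaHom K ∘ Y.col i) =
      resolv M *ᵥ (sigmaHom K ∘ evalM M Y v) := by
    simp_rw [← Matrix.mulVec_mulVec, ← Matrix.mulVec_sum]
    congr 1
    ext i
    simp [evalM, RingHom.map_mulVec]
  rw [Matrix.mul_assoc, ← Matrix.mulVec_mulVec, h1]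
  simp_rw [hP, Matrix.add_mulVec]
  rw [Finset.sum_add_distrib, h2, Matrix.mulVec_add, Matrix.mulVec_mulVec, resolv_kill M E _ h,
    add_zero]
  ext i
  rw [Function.comp_apply, RingHom.map_mulVec]
  have hE : (E.map C).map (algebraMap K[X] (RatFunc K)) = E.map (sigmaHom K) := rfl
  rw [hE]
  congr 2
  ext j
  rw [Function.comp_apply, Finset.sum_apply, Finset.sum_apply, map_sum]
  refine Finset.sum_congr rfl fun i _ => ?_
  rw [RingHom.map_mulVec]
  rfl

theorem evalM_add {n m : ℕ} (M : Matrix (Fin n) (Fin n) K) (Y : Matrix (Fin n) (Fin m) K)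
    (v w : Fin m → K[X]) : evalM M Y (v + w) = evalM M Y v + evalM M Y w := by
  simp [evalM, Matrix.add_mulVec, Finset.sum_add_distrib]

theorem evalM_smul {n m : ℕ} (M : Matrix (Fin n) (Fin n) K) (Y : Matrix (Fin n) (Fin m) K)
    (c : K) (v : Fin m → K[X]) : evalM M Y (c • v) = c • evalM M Y v := by
  simp [evalM, Matrix.smul_mulVec, Finset.smul_sum]

/-- Linear version of `evalM`. -/
def evalLin {n m : ℕ} (M : Matrix (Fin n) (Fin n) K) (Y : Matrix (Fin n) (Fin m) K) :
    (Fin m → K[X]) →ₗ[K] (Fin n → K) where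
  toFun := evalM M Y
  map_add' := evalM_add M Y
  map_smul' := evalM_smul M Y

theorem evalM_sub {n m : ℕ} (M : Matrix (Fin n) (Fin n) K) (Y : Matrix (Fin n) (Fin m) K)
    (v w : Fin m → K[X]) : evalM M Y (v - w) = evalM M Y v - evalM M Y w :=
  map_sub (evalLin M Y) v w

theorem evalM_single {n m : ℕ} (M : Matrix (Fin n) (Fin n) K) (Y : Matrix (Fin n) (Fin m) K)
    (r : Fin m) (t : ℕ) : evalM M Y (Pi.single r (X ^ t)) = (M ^ t) *ᵥ Y.col r := by
  unfold evalM
  rw [Finset.sum_eq_single r]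
  · simp
  · intro i _ hi
    simp [hi]
  · simp

/-- Polynomial vectors of degree `< d`. -/
def iotaLin (K : Type*) [Field K] (m d : ℕ) : (Fin d × Fin m → K) →ₗ[K] (Fin m → K[X]) where
  toFun u := fun i => ∑ t : Fin d, C (u (t, i)) * X ^ (t : ℕ)
  map_add' u w := by ext1 i; simp [add_mul, Finset.sum_add_distrib]
  map_smul' c u := by ext1 i; simp [Finset.smul_sum, smul_eq_C_mul, mul_assoc]

theorem iotaLin_degree (m d : ℕ) (u : Fin d × Fin m → K) (i : Fin m) :
    (iotaLin K m d u i).degree < (d : WithBot ℕ) :=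
  degree_sum_fin_lt _

theorem evalM_iota {n m d : ℕ} (M : Matrix (Fin n) (Fin n) K) (Y : Matrix (Fin n) (Fin m) K)
    (u : Fin d × Fin m → K) :
    evalM M Y (iotaLin K m d u) = ∑ p, u p • ((M ^ (p.1 : ℕ)) *ᵥ Y.col p.2) := by
  rw [Fintype.sum_prod_type_right]
  simp [evalM, iotaLin, Matrix.sum_mulVec, Algebra.algebraMap_eq_smul_one, Matrix.smul_mulVec]

theorem dot_row {n m : ℕ} (M : Matrix (Fin n) (Fin n) K) (Y : Matrix (Fin n) (Fin m) K)
    (t : ℕ) (r : Fin m) (w : Fin n → K) :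
    ((Mᵀ ^ t) *ᵥ Y.col r) ⬝ᵥ w = ((Yᵀ * M ^ t) *ᵥ w) r := by
  rw [← Matrix.transpose_pow, Matrix.mulVec_transpose, ← Matrix.dotProduct_mulVec,
    ← Matrix.mulVec_mulVec]
  rfl

/-- Coefficients of the remainder modulo `f`. -/
def coefvec (f : K[X]) (n : ℕ) : K[X] →ₗ[K] (Fin n → K) where
  toFun p := fun i => (p % f).coeff i
  map_add' p q := by ext i; simp [Polynomial.add_mod]
  map_smul' c p := by ext i; simp [Polynomial.mod_def, smul_modByMonic]

theorem degree_mod_lt' {n : ℕ} {f : K[X]} (hn : 1 ≤ n) (hf : f.natDegree = n) (p : K[X]) :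
    (p % f).natDegree < n := by
  rw [← hf]
  exact natDegree_mod_lt _ (by omega)

theorem coefvec_eq_zero {n : ℕ} {f : K[X]} (hn : 1 ≤ n) (hf : f.natDegree = n) (p : K[X]) :
    coefvec f n p = 0 ↔ f ∣ p := by
  rw [← EuclideanDomain.mod_eq_zero]
  constructor
  · intro h
    ext k
    by_cases hk : k < n
    · exact congrFun h ⟨k, hk⟩
    · rw [coeff_zero]
      exact coeff_eq_zero_of_natDegree_lt (by have := degree_mod_lt' hn hf p; omega)
  · intro h
    ext i
    simp [coefvec, h]

theorem coefvec_congr {n : ℕ} {f : K[X]} (hn : 1 ≤ n) (hf : f.natDegree = n) {p q : K[X]}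
    (h : f ∣ p - q) : coefvec f n p = coefvec f n q := by
  rw [← sub_eq_zero, ← map_sub, coefvec_eq_zero hn hf]
  exact h

theorem mulMat_coefvec {n : ℕ} {f : K[X]} (hn : 1 ≤ n) (hf : f.natDegree = n) (a p : K[X]) :
    mulMat f a n *ᵥ coefvec f n p = coefvec f n (a * p) := by
  have h1 : coefvec f n (a * p) = coefvec f n (a * (p % f)) := by
    apply coefvec_congr hn hf
    rw [← mul_sub]
    refine Dvd.dvd.mul_left ?_ _
    exact ⟨p / f, by linear_combination - EuclideanDomain.div_add_mod p f⟩
  have h2 : p % f = ∑ k : Fin n, (p % f).coeff k • X ^ (k : ℕ) := by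
    conv_lhs => rw [as_sum_range' (p % f) n (degree_mod_lt' hn hf p)]
    rw [Finset.sum_range]
    simp [smul_X_eq_monomial]
  rw [h1, h2, Finset.mul_sum, map_sum]
  ext i
  simp only [Matrix.mulVec, dotProduct, Finset.sum_apply]
  refine Finset.sum_congr rfl fun k _ => ?_
  rw [mul_smul_comm, map_smul, mul_comm a]
  simp [mulMat, coefvec, mul_comm]

theorem mulMat_pow_coefvec {n : ℕ} {f : K[X]} (hn : 1 ≤ n) (hf : f.natDegree = n) (a p : K[X])
    (k : ℕ) : (mulMat f a n ^ k) *ᵥ coefvec f n p = coefvec f n (a ^ k * p) := by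
  induction k with
  | zero => simp
  | succ k ih => rw [pow_succ', ← Matrix.mulVec_mulVec, ih, mulMat_coefvec hn hf, pow_succ', mul_assoc]

theorem aeval_coefvec {n : ℕ} {f : K[X]} (hn : 1 ≤ n) (hf : f.natDegree = n) (a p q : K[X]) :
    (aeval (mulMat f a n) q) *ᵥ coefvec f n p = coefvec f n (p * q.comp a) := by
  induction q using Polynomial.induction_on' with
  | add q r hq hr => rw [map_add, Matrix.add_mulVec, hq, hr, add_comp, mul_add, map_add]
  | monomial t b =>
    rw [aeval_monomial, Algebra.algebraMap_eq_smul_one, smul_mul_assoc, one_mul,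
      Matrix.smul_mulVec, mulMat_pow_coefvec hn hf, ← map_smul]
    congr 1
    rw [← C_mul_X_pow_eq_monomial, smul_eq_C_mul]
    simp
    ring

theorem Xup_col {n m : ℕ} {f : K[X]} (hn : 1 ≤ n) (hmn : m ≤ n) (hf : f.natDegree = n)
    (i : Fin m) : (Xup K n m).col i = coefvec f n (X ^ (i : ℕ)) := by
  have h : (X ^ (i : ℕ) : K[X]) % f = X ^ (i : ℕ) := by
    rw [Polynomial.mod_eq_self_iff (by rintro rfl; simp at hf; omega), degree_X_pow,
      degree_eq_natDegree (by rintro rfl; simp at hf; omega), hf]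
    exact_mod_cast lt_of_lt_of_le i.2 hmn
  ext j
  simp [Xup, coefvec, h, coeff_X_pow]

theorem evalM_eq {n m : ℕ} {f : K[X]} (hn : 1 ≤ n) (hmn : m ≤ n) (hf : f.natDegree = n)
    (a : K[X]) (v : Fin m → K[X]) :
    evalM (mulMat f a n) (Xup K n m) v = coefvec f n (relEval a v) := by
  simp only [evalM, relEval, map_sum]
  refine Finset.sum_congr rfl fun i _ => ?_
  rw [Xup_col hn hmn hf, aeval_coefvec hn hf]

theorem isRelation_iff {n m : ℕ} {f : K[X]} (hn : 1 ≤ n) (hmn : m ≤ n) (hf : f.natDegree = n)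
    (a : K[X]) (v : Fin m → K[X]) :
    evalM (mulMat f a n) (Xup K n m) v = 0 ↔ IsRelation f a v := by
  rw [evalM_eq hn hmn hf, coefvec_eq_zero hn hf]
  rfl

theorem Xup_mulVec {n m : ℕ} (hmn : m ≤ n) (w : Fin n → K) (i : Fin m) :
    ((Xup K n m)ᵀ *ᵥ w) i = w ⟨i, lt_of_lt_of_le i.2 hmn⟩ := by
  simp only [Matrix.mulVec, dotProduct, Matrix.transpose_apply, Xup]
  rw [Finset.sum_eq_single ⟨i, lt_of_lt_of_le i.2 hmn⟩]
  · simp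
  · intro j _ hj
    have : (j : ℕ) ≠ i := fun h => hj (Fin.ext h)
    simp [this]
  · simp

theorem isTrunc_iff {n m : ℕ} {f : K[X]} (hn : 1 ≤ n) (hmn : m ≤ n) (hf : f.natDegree = n)
    (a : K[X]) (v : Fin m → K[X]) :
    (∀ k : ℕ, (Xup K n m)ᵀ *ᵥ ((mulMat f a n ^ k) *ᵥ evalM (mulMat f a n) (Xup K n m) v) = 0) ↔
      IsTruncRelation f a m v := by
  unfold IsTruncRelation
  refine forall_congr' fun k => ?_
  rw [evalM_eq hn hmn hf, mulMat_pow_coefvec hn hf, funext_iff]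
  constructor
  · intro h j hj
    have := h ⟨j, hj⟩
    rwa [Xup_mulVec hmn] at this
  · intro h i
    rw [Xup_mulVec hmn]
    exact h i i.2

/-- Infinite observability map. -/
def obsInf {n m : ℕ} (M : Matrix (Fin n) (Fin n) K) (Y : Matrix (Fin n) (Fin m) K) :
    (Fin n → K) →ₗ[K] (ℕ → Fin m → K) :=
  LinearMap.pi fun k => Matrix.toLin' (Yᵀ * M ^ k)

/-- Restriction to the first `d` blocks. -/
def resLin (K : Type*) [Field K] (m d : ℕ) : (ℕ → Fin m → K) →ₗ[K] (Fin d × Fin m → K) where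
  toFun g := fun p => g p.1 p.2
  map_add' _ _ := rfl
  map_smul' _ _ := rfl

theorem hankel_factor {n m d : ℕ} (f a : K[X]) :
    Matrix.toLin' (hankelMat f a n m d) =
      (resLin K m d ∘ₗ obsInf (mulMat f a n) (Xup K n m)) ∘ₗ
        evalLin (mulMat f a n) (Xup K n m) ∘ₗ iotaLin K m d := by
  apply LinearMap.ext
  intro u
  ext p
  simp only [LinearMap.comp_apply]
  change _ = (((Xup K n m)ᵀ * (mulMat f a n) ^ (p.1 : ℕ)) *ᵥ
    evalM (mulMat f a n) (Xup K n m) (iotaLin K m d u)) p.2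
  rw [evalM_iota, Matrix.mulVec_sum, Finset.sum_apply, Matrix.toLin'_apply, Matrix.mulVec,
    dotProduct]
  refine Finset.sum_congr rfl fun q _ => ?_
  rw [Matrix.mulVec_smul, Pi.smul_apply, smul_eq_mul, mul_comm, Matrix.mulVec_mulVec,
    Matrix.mul_assoc, ← pow_add]
  rfl

theorem resolv_transpose {n : ℕ} (M : Matrix (Fin n) (Fin n) K) : (resolv M)ᵀ = resolv Mᵀ := by
  unfold resolv
  rw [Matrix.transpose_nonsing_inv, charmatrix_transpose]
  rfl

theorem fracMat_eq (f a : K[X]) (n m : ℕ) : fracMat f a n m m =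
    ((Xup K n m)ᵀ).map (sigmaHom K) * resolv (mulMat f a n) * (Xup K n m).map (sigmaHom K) := by
  unfold fracMat
  congr 1
  · congr 1
    ext i j
    by_cases h : (i : ℕ) = j <;> simp [projL, Xup, h, eq_comm]
  · ext i j
    by_cases h : (i : ℕ) = j <;> simp [Xup, h]

theorem rightDesc_of {n m : ℕ} (M : Matrix (Fin n) (Fin n) K) (Y : Matrix (Fin n) (Fin m) K)
    (D : Matrix (Fin m) (Fin m) K[X])
    (h : ∀ j, ∀ k : ℕ, Yᵀ *ᵥ ((M ^ k) *ᵥ evalM M Y (D.col j)) = 0) :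
    ∃ N : Matrix (Fin m) (Fin m) K[X], ((Yᵀ).map (sigmaHom K) * resolv M * Y.map (sigmaHom K)) *
      D.map (algebraMap K[X] (RatFunc K)) = N.map (algebraMap K[X] (RatFunc K)) := by
  choose p hp using fun j => frac_poly M Yᵀ Y (D.col j) (h j)
  refine ⟨fun i j => p j i, ?_⟩
  ext i j
  exact congrFun (hp j) i

theorem describable_of {n m d : ℕ} (M : Matrix (Fin n) (Fin n) K) (Y : Matrix (Fin n) (Fin m) K)
    (hsurj : LinearMap.range (evalLin M Y ∘ₗ iotaLin K m d) = LinearMap.range (evalLin M Y))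
    (hinj : Function.Injective ((resLin K m d ∘ₗ obsInf M Y).domRestrict
      (LinearMap.range (evalLin M Y)))) :
    DescribableInDegree ((Yᵀ).map (sigmaHom K) * resolv M * Y.map (sigmaHom K)) d := by
  constructor
  · have hex : ∀ j : Fin m, ∃ u : Fin d × Fin m → K,
        evalM M Y (iotaLin K m d u) = evalM M Y (Pi.single j (X ^ d)) := by
      intro j
      have : evalLin M Y (Pi.single j (X ^ d)) ∈ LinearMap.range (evalLin M Y ∘ₗ iotaLin K m d) := by
        rw [hsurj]; exact ⟨_, rfl⟩
      exact this
    choose u hu using hex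
    let D : Matrix (Fin m) (Fin m) K[X] :=
      fun i j => (Pi.single j (X ^ d) - iotaLin K m d (u j) : Fin m → K[X]) i
    have hD : ∀ i j, (D i j - if i = j then X ^ d else 0).degree < (d : WithBot ℕ) := by
      intro i j
      have : (D i j - if i = j then X ^ d else 0) = - iotaLin K m d (u j) i := by
        simp [D, Pi.single_apply]
      rw [this, degree_neg]
      exact iotaLin_degree _ _ _ _
    have hz : ∀ j, evalM M Y (D.col j) = 0 := by
      intro j
      change evalLin M Y (Pi.single j (X ^ d) - iotaLin K m d (u j)) = 0
      rw [map_sub, sub_eq_zero]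
      exact (hu j).symm
    obtain ⟨N, hN⟩ := rightDesc_of M Y D (fun j k => by rw [hz]; simp)
    exact ⟨N, D, ⟨monic_det D hD, hN⟩, matDeg_monic D hD⟩
  · obtain ⟨L, hL⟩ := LinearMap.exists_leftInverse_of_injective _ (LinearMap.ker_eq_bot.2 hinj)
    have hex : ∀ r : Fin m, ∃ u : Fin d × Fin m → K, ∀ w ∈ LinearMap.range (evalLin M Y),
        ((Yᵀ * M ^ d) *ᵥ w) r = ∑ p, u p * ((Yᵀ * M ^ (p.1 : ℕ)) *ᵥ w) p.2 := by
      intro r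
      let g : (Fin d × Fin m → K) →ₗ[K] K :=
        (LinearMap.proj r ∘ₗ Matrix.toLin' (Yᵀ * M ^ d)) ∘ₗ
          (LinearMap.range (evalLin M Y)).subtype ∘ₗ L
      refine ⟨fun p => g (Pi.single p 1), fun w hw => ?_⟩
      have h1 := LinearMap.congr_fun hL ⟨w, hw⟩
      have h2 : ((Yᵀ * M ^ d) *ᵥ w) r = g (fun p => ((Yᵀ * M ^ (p.1 : ℕ)) *ᵥ w) p.2) := by
        change _ = ((Yᵀ * M ^ d) *ᵥ ((L (((resLin K m d ∘ₗ obsInf M Y).domRestrict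
          (LinearMap.range (evalLin M Y))) ⟨w, hw⟩) : LinearMap.range (evalLin M Y)) :
            Fin n → K)) r
        rw [LinearMap.comp_apply] at h1
        rw [h1]
        rfl
      rw [h2, LinearMap.pi_apply_eq_sum_univ g]
      refine Finset.sum_congr rfl fun p _ => ?_
      rw [smul_eq_mul, mul_comm]
      congr 2
      ext q
      simp [Pi.single_apply, eq_comm]
    choose u hu using hex
    let D : Matrix (Fin m) (Fin m) K[X] :=
      fun i j => (Pi.single j (X ^ d) - iotaLin K m d (u j) : Fin m → K[X]) i
    have hD : ∀ i j, (D i j - if i = j then X ^ d else 0).degree < (d : WithBot ℕ) := by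
      intro i j
      have : (D i j - if i = j then X ^ d else 0) = - iotaLin K m d (u j) i := by
        simp [D, Pi.single_apply]
      rw [this, degree_neg]
      exact iotaLin_degree _ _ _ _
    have hdot : ∀ j, ∀ w ∈ LinearMap.range (evalLin M Y), evalM Mᵀ Y (D.col j) ⬝ᵥ w = 0 := by
      intro j w hw
      have : evalM Mᵀ Y (D.col j) = evalM Mᵀ Y (Pi.single j (X ^ d)) -
          evalM Mᵀ Y (iotaLin K m d (u j)) :=
        evalM_sub Mᵀ Y _ _
      rw [this, evalM_single, evalM_iota, sub_dotProduct, dot_row, hu j w hw, sum_dotProduct,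
        sub_eq_zero]
      refine Finset.sum_congr rfl fun p _ => ?_
      rw [smul_dotProduct, dot_row, smul_eq_mul]
    obtain ⟨N, hN⟩ := rightDesc_of Mᵀ Y D (fun j k => by
      ext i
      have h1 : (Yᵀ *ᵥ ((Mᵀ ^ k) *ᵥ evalM Mᵀ Y (D.col j))) i =
          evalM Mᵀ Y (D.col j) ⬝ᵥ ((M ^ k) *ᵥ Y.col i) := by
        rw [← Matrix.transpose_pow, Matrix.mulVec_transpose (M ^ k), Matrix.dotProduct_mulVec,
          dotProduct_comm]
        rfl
      rw [h1]
      exact hdot j _ ⟨Pi.single i (X ^ k), evalM_single M Y i k⟩)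
    refine ⟨Dᵀ, Nᵀ, ⟨?_, ?_⟩, ?_⟩
    · rw [Matrix.det_transpose]
      exact monic_det D hD
    · apply Matrix.transpose_injective
      rw [Matrix.transpose_mul, Matrix.transpose_mul, Matrix.transpose_mul, resolv_transpose,
        ← Matrix.mul_assoc]
      exact hN
    · apply matDeg_monic
      intro i j
      have := hD j i
      simpa [eq_comm] using this

theorem span_le_ker {m : ℕ} {V : Type*} [Zero V] (B : Matrix (Fin m) (Fin m) K[X])
    (S : Submodule K[X] (Fin m → K[X])) (Φ : (Fin m → K[X]) → V) (hS : ∀ v, v ∈ S ↔ Φ v = 0)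
    (hB : ∀ j, Φ (fun i => B i j) = 0) :
    ∀ v, v ∈ Submodule.span K[X] (Set.range fun j => fun i => B i j) → Φ v = 0 := by
  intro v hv
  rw [← hS]
  refine Submodule.span_le.2 ?_ hv
  rintro _ ⟨j, rfl⟩
  exact (hS _).2 (hB j)

theorem relEval_add (a : K[X]) {m : ℕ} (v w : Fin m → K[X]) :
    relEval a (v + w) = relEval a v + relEval a w := by
  simp [relEval, mul_add, Finset.sum_add_distrib]

theorem relEval_smul (a : K[X]) {m : ℕ} (c : K[X]) (v : Fin m → K[X]) :
    relEval a (c • v) = c.comp a * relEval a v := by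
  simp [relEval, Finset.mul_sum, mul_left_comm]

/-- Relations form a submodule. -/
def relSub (f a : K[X]) (m : ℕ) : Submodule K[X] (Fin m → K[X]) where
  carrier := {v | IsRelation f a v}
  add_mem' {v w} hv hw := by
    change f ∣ _
    rw [relEval_add]
    exact dvd_add hv hw
  zero_mem' := by
    change f ∣ _
    simp [relEval]
  smul_mem' c v hv := by
    change f ∣ _
    rw [relEval_smul]
    exact Dvd.dvd.mul_left hv _

/-- Truncated relations form a submodule. -/
def truncSub (f a : K[X]) (ℓ m : ℕ) : Submodule K[X] (Fin m → K[X]) where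
  carrier := {v | IsTruncRelation f a ℓ v}
  add_mem' {v w} hv hw := by
    intro k j hj
    rw [relEval_add, mul_add, Polynomial.add_mod, coeff_add, hv k j hj, hw k j hj, add_zero]
  zero_mem' := by
    intro k j hj
    simp [relEval]
  smul_mem' c v hv := by
    intro k j hj
    rw [relEval_smul]
    induction c using Polynomial.induction_on' with
    | add p q hp hq => rw [add_comp, add_mul, mul_add, Polynomial.add_mod, coeff_add, hp, hq, add_zero]
    | monomial t b =>
      have : a ^ k * ((monomial t b).comp a * relEval a v) = b • (a ^ (k + t) * relEval a v) := by
        rw [← C_mul_X_pow_eq_monomial, smul_eq_C_mul]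
        simp
        ring
      rw [this, Polynomial.mod_def, smul_modByMonic, ← Polynomial.mod_def, coeff_smul,
        hv (k + t) j hj, smul_zero]

theorem rank_hankel_le_determinantalDegree
    (n m d : ℕ) (hn : 1 ≤ n) (hm : 1 ≤ m) (hmn : m ≤ n) (hd : 1 ≤ d)
    (f a : K[X]) (hf : f.natDegree = n) (ha : a.degree < (n : WithBot ℕ))
    (B₀ : Matrix (Fin m) (Fin m) K[X]) (hB₀ : IsRelBasis f a B₀)
    (D₀ : Matrix (Fin m) (Fin m) K[X]) (hD₀ : IsTruncBasis f a m D₀) :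
    (hankelMat f a n m d).rank ≤ B₀.det.natDegree ∧
    ((hankelMat f a n m d).rank = B₀.det.natDegree →
      D₀.det.natDegree = B₀.det.natDegree ∧
        DescribableInDegree (fracMat f a n m m) d) ∧
    ((hankelMat f a n m d).rank = n →
      D₀.det.natDegree = n ∧ B₀.det.natDegree = n ∧
        DescribableInDegree (fracMat f a n m m) d) := by
  have hrank : (hankelMat f a n m d).rank = Module.finrank K (LinearMap.range
      ((resLin K m d ∘ₗ obsInf (mulMat f a n) (Xup K n m)) ∘ₗ
        evalLin (mulMat f a n) (Xup K n m) ∘ₗ iotaLin K m d)) := by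
    rw [← hankel_factor]; rfl
  have hν : Module.finrank K (LinearMap.range (evalLin (mulMat f a n) (Xup K n m))) =
      B₀.det.natDegree := by
    refine finrank_range_det B₀ hB₀.1.1 _ (fun v hv => hB₀.2 v ?_) (fun v hv => ?_)
    · exact (isRelation_iff hn hmn hf a v).1 hv
    · refine span_le_ker B₀ (relSub f a m) (evalLin (mulMat f a n) (Xup K n m)) ?_ ?_ v hv
      · intro v
        exact (isRelation_iff hn hmn hf a v).symm
      · intro j
        exact (isRelation_iff hn hmn hf a _).2 (hB₀.1.2 j)
  have hT : ∀ v, (obsInf (mulMat f a n) (Xup K n m) ∘ₗ evalLin (mulMat f a n) (Xup K n m)) v = 0 ↔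
      IsTruncRelation f a m v := by
    intro v
    rw [← isTrunc_iff hn hmn hf a v, funext_iff]
    refine forall_congr' fun k => ?_
    rw [Matrix.mulVec_mulVec]
    rfl
  have hδ : Module.finrank K (LinearMap.range (obsInf (mulMat f a n) (Xup K n m) ∘ₗ
      evalLin (mulMat f a n) (Xup K n m))) = D₀.det.natDegree := by
    refine finrank_range_det D₀ hD₀.1 _ (fun v hv => hD₀.2.2 v ?_) (fun v hv => ?_)
    · exact (hT v).1 hv
    · refine span_le_ker D₀ (truncSub f a m m) _ ?_ ?_ v hv
      · intro v
        exact (hT v).symm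
      · intro j
        exact (hT _).2 (hD₀.2.1 j)
  have h1 : (hankelMat f a n m d).rank ≤ D₀.det.natDegree := by
    have hfd : FiniteDimensional K (LinearMap.range (obsInf (mulMat f a n) (Xup K n m) ∘ₗ
        evalLin (mulMat f a n) (Xup K n m))) := by
      rw [LinearMap.range_comp]
      infer_instance
    rw [hrank, ← hδ, LinearMap.comp_assoc, LinearMap.range_comp, ← LinearMap.comp_assoc]
    refine (Submodule.finrank_map_le _ _).trans ?_
    exact Submodule.finrank_mono (LinearMap.range_comp_le_range _ _)
  have h2 : D₀.det.natDegree ≤ B₀.det.natDegree := by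
    rw [← hδ, ← hν, LinearMap.range_comp]
    exact Submodule.finrank_map_le _ _
  have h3 : B₀.det.natDegree ≤ n := by
    rw [← hν]
    simpa using Submodule.finrank_le (LinearMap.range (evalLin (mulMat f a n) (Xup K n m)))
  have h4 : (hankelMat f a n m d).rank = B₀.det.natDegree →
      DescribableInDegree (fracMat f a n m m) d := by
    intro hr
    rw [hrank, ← hν] at hr
    obtain ⟨hsurj, hinj⟩ := abs_lin _ _ _ hr
    rw [fracMat_eq]
    exact describable_of _ _ hsurj hinj
  refine ⟨h1.trans h2, fun h => ⟨by omega, h4 h⟩, fun h => ⟨by omega, by omega, h4 (by omega)⟩⟩
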